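/- Let U ⊆ ℝ² be a connected open set, Γ a torsion-free affine connection on U with projective Schouten tensor P, Λ ≠ 0 real, and let g be the metric on U×ℝ² with components g(∂_{ξ_i},∂_{x^j}) = ½δ_{ij}, g(∂_{x^i},∂_{x^j}) = −Σ_k Γ^k_{ij}ξ_k + Λξ_iξ_j + Λ^{-1}P_{(ij)}, g(∂_{ξ_i},∂_{ξ_j}) = 0. If 𝒦 is any smooth vector field on U×ℝ² with ℒ_𝒦 g = 0 (a Killing field), then there exist a smooth vector field K = (K¹,K²) on U and a smooth one-form ρ on U such that (ℒ_K Γ)^k_{ij} = δ^k_i ρ_j + δ^k_j ρ_i on U (K is projective) and 𝒦 = Σ_i K^i ∂_{x^i} + Σ_i (−Σ_j ξ_j ∂_i K^j + Λ^{-1} ρ_i) ∂_{ξ_i}; in particular the x-components of 𝒦 are independent of (ξ₁,ξ₂) and every Killing field of g is the lift of a projective vector field. -/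

import Mathlib

noncomputable section
open Matrix

/-- Points of the plane. -/
abbrev Pt2 : Type := Fin 2 → ℝ
/-- Points of the 4-manifold `U × ℝ²`, coordinates `(x¹, x², ξ₁, ξ₂)`. -/
abbrev Pt4 : Type := Fin 4 → ℝ

/-- Partial derivative of a function on the plane. -/
def pd2 (i : Fin 2) (f : Pt2 → ℝ) (x : Pt2) : ℝ := fderiv ℝ f x (Pi.single i 1)
/-- Partial derivative of a function on `ℝ⁴`. -/
def pd4 (a : Fin 4) (f : Pt4 → ℝ) (p : Pt4) : ℝ := fderiv ℝ f p (Pi.single a 1)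

/-- Base point `(x¹,x²)` of a point of `U × ℝ²`. -/
def bpt (p : Pt4) : Pt2 := ![p 0, p 1]
/-- Fibre coordinates `(ξ₁,ξ₂)` of a point of `U × ℝ²`. -/
def fib (p : Pt4) : Fin 2 → ℝ := ![p 2, p 3]

/-- An affine connection: `conn k i j` is the Christoffel symbol `Γ^k_{ij}`. -/
abbrev Conn : Type := Fin 2 → Fin 2 → Fin 2 → Pt2 → ℝ

/-- Curvature `R_{ij}{}^k{}_l` of a connection. -/
def curv (Γ : Conn) (i j k l : Fin 2) (x : Pt2) : ℝ :=
  pd2 i (Γ k j l) x - pd2 j (Γ k i l) x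
    + ∑ m, (Γ k i m x * Γ m j l x - Γ k j m x * Γ m i l x)

/-- Ricci tensor `R_{jl} = R_{kj}{}^k{}_l`. -/
def ricciT (Γ : Conn) (j l : Fin 2) (x : Pt2) : ℝ := ∑ k, curv Γ k j k l x

/-- Projective Schouten tensor `P_{ij} = R_{(ij)} + (1/3) R_{[ij]}`. -/
def schouten (Γ : Conn) (i j : Fin 2) (x : Pt2) : ℝ :=
  (ricciT Γ i j x + ricciT Γ j i x) / 2 + (ricciT Γ i j x - ricciT Γ j i x) / 6

/-- The Einstein lift metric with parameter `Λ`: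
`g(∂_{ξ_i},∂_{x^j}) = ½δ_{ij}`, `g(∂_{x^i},∂_{x^j}) = −Σ_k Γ^k_{ij}ξ_k + Λξ_iξ_j + Λ⁻¹P_{(ij)}`,
`g(∂_{ξ_i},∂_{ξ_j}) = 0`. -/
def einsteinLift (Γ : Conn) (Λ : ℝ) (p : Pt4) : Matrix (Fin 4) (Fin 4) ℝ :=
  let A : Fin 2 → Fin 2 → ℝ := fun i j =>
    -(∑ k, Γ k i j (bpt p) * fib p k) + Λ * fib p i * fib p j
      + Λ⁻¹ * ((schouten Γ i j (bpt p) + schouten Γ j i (bpt p)) / 2)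
  !![A 0 0, A 0 1, 1/2, 0;
     A 1 0, A 1 1, 0, 1/2;
     1/2, 0, 0, 0;
     0, 1/2, 0, 0]

/-- Lie derivative `(ℒ_X T)_{ab} = Σ_c (X^c ∂_c T_{ab} + T_{cb} ∂_a X^c + T_{ac} ∂_b X^c)`
of a covariant 2-tensor on an open subset of `ℝ⁴`. -/
def lieT (X : Fin 4 → Pt4 → ℝ) (T : Pt4 → Matrix (Fin 4) (Fin 4) ℝ)
    (a b : Fin 4) (p : Pt4) : ℝ :=
  ∑ c, (X c p * pd4 c (fun q => T q a b) p
    + T p c b * pd4 a (X c) p + T p a c * pd4 b (X c) p)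

/-- Lie derivative of a connection along a vector field `K` on the plane. -/
def lieConn (Γ : Conn) (K : Fin 2 → Pt2 → ℝ) (k i j : Fin 2) (x : Pt2) : ℝ :=
  pd2 i (fun y => pd2 j (K k) y) x
    + ∑ m, (K m x * pd2 m (Γ k i j) x - Γ m i j x * pd2 m (K k) x
        + Γ k i m x * pd2 j (K m) x + Γ k j m x * pd2 i (K m) x)

/-!
Let `X` be a Killing field. The `ξξ`-equations make the matrix of fibre derivatives
`∂_{ξ_i} X^j` of the base components antisymmetric, and hence constant along the fibres. The
`ξx`-equations then give the fibre derivatives of the fibre components, and the integrability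
condition for these is affine in `ξ`, with linear part a nonzero multiple of `Λ ∂_{ξ_l} X^i`.
So the base components of `X` do not depend on `ξ`, the fibre components are affine in `ξ`,
and `X` is a cotangent lift of a vector field `K` translated by a one-form `σ`. For such a field
the `xx`-equations are affine in `ξ`: the quadratic terms cancel, and the coefficient of `ξ_k` is
the projective equation for `K` with `ρ = Λ σ`.
-/

section PartialDerivatives

variable {κ : Type*} [DecidableEq κ] {f g : (κ → ℝ) → ℝ} {V : Set (κ → ℝ)} {p : κ → ℝ}

/-- The partial derivative `∂_a f` of a function on `ℝ^κ`; `pd2` and `pd4` are the cases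
`κ = Fin 2` and `κ = Fin 4`. -/
def partialDeriv (a : κ) (f : (κ → ℝ) → ℝ) (p : κ → ℝ) : ℝ :=
  fderiv ℝ f p (Pi.single a 1)

lemma partialDeriv_const (a : κ) (r : ℝ) : partialDeriv a (fun _ => r) p = 0 := by
  simp [partialDeriv]

lemma partialDeriv_congr (hV : IsOpen V) (h : Set.EqOn f g V) (a : κ) :
    Set.EqOn (partialDeriv a f) (partialDeriv a g) V := fun p hp => by
  simp only [partialDeriv, (h.eventuallyEq_of_mem (hV.mem_nhds hp)).fderiv_eq]

lemma partialDeriv_neg [Finite κ] (a : κ) :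
    partialDeriv a (fun q => -f q) p = -partialDeriv a f p := by
  cases nonempty_fintype κ
  simp [partialDeriv, fderiv_fun_neg]

variable [Fintype κ]

lemma contDiffOn_partialDeriv {m n : WithTop ℕ∞} (hmn : m + 1 ≤ n) (hV : IsOpen V)
    (hf : ContDiffOn ℝ n f V) (a : κ) : ContDiffOn ℝ m (partialDeriv a f) V :=
  (hf.fderiv_of_isOpen hV hmn).clm_apply contDiffOn_const

lemma differentiableOn_partialDeriv (hV : IsOpen V) (hf : ContDiffOn ℝ 2 f V) (a : κ) :
    DifferentiableOn ℝ (partialDeriv a f) V :=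
  (contDiffOn_partialDeriv (m := 1) one_add_one_eq_two.le hV hf a).differentiableOn one_ne_zero

lemma partialDeriv_comm (hV : IsOpen V) (hf : ContDiffOn ℝ 2 f V) (a b : κ) (hp : p ∈ V) :
    partialDeriv a (partialDeriv b f) p = partialDeriv b (partialDeriv a f) p := by
  have hsymm : IsSymmSndFDerivAt ℝ f p :=
    (hf.contDiffAt (hV.mem_nhds hp)).isSymmSndFDerivAt
      (minSmoothness_of_isRCLikeNormedField (𝕜 := ℝ)).le
  have hdiff : DifferentiableAt ℝ (fderiv ℝ f) p :=
    ((hf.fderiv_of_isOpen (m := 1) hV one_add_one_eq_two.le).differentiableOn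
      one_ne_zero).differentiableAt (hV.mem_nhds hp)
  have hsnd (v w : κ → ℝ) : fderiv ℝ (fun q => fderiv ℝ f q v) p w
      = fderiv ℝ (fderiv ℝ f) p w v := by
    simp [fderiv_clm_apply hdiff (differentiableAt_const v)]
  exact (hsnd _ _).trans ((hsymm _ _).trans (hsnd _ _).symm)

end PartialDerivatives

section Coordinates

variable {ι κ : Type*} (e : ι ⊕ ι ≃ κ)

/-- The projection `(x, ξ) ↦ x` of the total space `ℝ^κ`. Throughout, an equivalence
`e : ι ⊕ ι ≃ κ` says which coordinates are base coordinates (`x^i = p (e (.inl i))`) and which are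
fibre coordinates (`ξ_i = p (e (.inr i))`). -/
def base : (κ → ℝ) →L[ℝ] (ι → ℝ) := .pi fun i => .proj (e (.inl i))

/-- The fibre coordinates `(x, ξ) ↦ ξ` on the total space `ℝ^κ`. -/
def fiber : (κ → ℝ) →L[ℝ] (ι → ℝ) := .pi fun i => .proj (e (.inr i))

/-- The point of the total space with base point `x` and fibre coordinates `ξ`. -/
def point (x ξ : ι → ℝ) : κ → ℝ := fun a => Sum.elim x ξ (e.symm a)

variable {e} {n : WithTop ℕ∞} {U : Set (ι → ℝ)} {x : ι → ℝ} {p : κ → ℝ}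

@[simp]
lemma base_point (x ξ : ι → ℝ) : base e (point e x ξ) = x := by
  ext i; simp [base, point]

@[simp]
lemma fiber_point (x ξ : ι → ℝ) : fiber e (point e x ξ) = ξ := by
  ext i; simp [fiber, point]

@[simp]
lemma point_base_fiber (p : κ → ℝ) : point e (base e p) (fiber e p) = p := by
  ext a
  obtain ⟨i | i, rfl⟩ := e.surjective a <;> simp [point, base, fiber]

lemma contDiff_point [Fintype ι] [Fintype κ] (ξ : ι → ℝ) : ContDiff ℝ n fun x => point e x ξ := by
  refine contDiff_pi.2 fun a => ?_
  obtain ⟨i | i, rfl⟩ := e.surjective a <;> simp only [point, Equiv.symm_apply_apply, Sum.elim_inl,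
    Sum.elim_inr] <;> fun_prop

lemma contDiffOn_comp_zeroSection [Fintype ι] [Fintype κ] {f : (κ → ℝ) → ℝ}
    (hf : ContDiffOn ℝ n f (base e ⁻¹' U)) :
    ContDiffOn ℝ n (fun x => f (point e x 0)) U :=
  hf.comp (contDiff_point 0).contDiffOn fun x hx => by simpa using hx

lemma point_add_smul (x ξ : ι → ℝ) (t : ℝ) :
    point e x (t • ξ) = point e x 0 + t • point e 0 ξ := by
  ext a
  obtain ⟨i | i, rfl⟩ := e.surjective a <;> simp [point]

variable [DecidableEq κ]

@[simp]
lemma base_single_inr (i : ι) : base e (Pi.single (e (.inr i)) 1) = 0 := by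
  ext j; simp [base]

@[simp]
lemma fiber_single_inl (i : ι) : fiber e (Pi.single (e (.inl i)) 1) = 0 := by
  ext j; simp [fiber]

@[simp]
lemma base_single_inl [DecidableEq ι] (i : ι) :
    base e (Pi.single (e (.inl i)) 1) = Pi.single i 1 := by
  ext j; simp [base, Pi.single_apply]

@[simp]
lemma fiber_single_inr [DecidableEq ι] (i : ι) :
    fiber e (Pi.single (e (.inr i)) 1) = Pi.single i 1 := by
  ext j; simp [fiber, Pi.single_apply]

lemma point_zero_eq_sum [Fintype ι] (ξ : ι → ℝ) :
    point e 0 ξ = ∑ i, ξ i • (Pi.single (e (.inr i)) 1 : κ → ℝ) := by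
  classical
  ext a
  obtain ⟨i | i, rfl⟩ := e.surjective a <;> simp [point, Pi.single_apply]

end Coordinates

section FiberAffine

variable {ι κ : Type*} [Fintype ι] (e : ι ⊕ ι ≃ κ)

/-- The function `s(x) - ∑ k, G_k(x) ξ_k`, affine along the fibres, with coefficients `G` and `s`
on the base. -/
def fiberAffine (G : ι → (ι → ℝ) → ℝ) (s : (ι → ℝ) → ℝ) (p : κ → ℝ) : ℝ :=
  s (base e p) - ∑ k, G k (base e p) * fiber e p k

variable {e} {G : ι → (ι → ℝ) → ℝ} {s : (ι → ℝ) → ℝ} {U : Set (ι → ℝ)} {x : ι → ℝ} {p : κ → ℝ}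

lemma coeff_eq_zero_of_fiberAffine_eq_zero
    (h : ∀ ξ, fiberAffine e G s (point e x ξ) = 0) (k : ι) : G k x = 0 := by
  classical
  have h0 := h 0
  have hk := h (Pi.single k 1)
  simp only [fiberAffine, base_point, fiber_point, Pi.zero_apply, mul_zero,
    Finset.sum_const_zero, Pi.single_apply, mul_ite, mul_one, Finset.sum_ite_eq',
    Finset.mem_univ, if_true] at h0 hk
  linarith

lemma sum_mul_affine {μ : Type*} [Fintype μ] (c s : μ → ℝ) (g : μ → ι → ℝ) (ξ : ι → ℝ) :
    ∑ m, c m * (s m - ∑ k, g m k * ξ k) = ∑ m, c m * s m - ∑ k, (∑ m, c m * g m k) * ξ k := by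
  simp only [mul_sub, Finset.sum_sub_distrib, Finset.mul_sum, Finset.sum_mul, mul_assoc]
  rw [Finset.sum_comm]

variable [Finite κ]

lemma hasFDerivAt_fiberAffine (hG : ∀ k, DifferentiableAt ℝ (G k) (base e p))
    (hs : DifferentiableAt ℝ s (base e p)) :
    HasFDerivAt (fiberAffine e G s)
      ((fderiv ℝ s (base e p)).comp (base e)
        - ∑ k, (G k (base e p) • (ContinuousLinearMap.proj k).comp (fiber e)
          + fiber e p k • (fderiv ℝ (G k) (base e p)).comp (base e))) p := by
  cases nonempty_fintype κ
  exact (hs.hasFDerivAt.comp p (base e).hasFDerivAt).fun_sub <| .fun_sum fun k _ =>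
    ((hG k).hasFDerivAt.comp p (base e).hasFDerivAt).fun_mul
      ((ContinuousLinearMap.proj k).comp (fiber e)).hasFDerivAt

variable [DecidableEq κ]

lemma partialDeriv_inr_fiberAffine (hG : ∀ k, DifferentiableAt ℝ (G k) (base e p))
    (hs : DifferentiableAt ℝ s (base e p)) (i : ι) :
    partialDeriv (e (.inr i)) (fiberAffine e G s) p = -G i (base e p) := by
  classical
  simp [partialDeriv, (hasFDerivAt_fiberAffine hG hs).fderiv, Pi.single_apply]

lemma eq_fiberAffine_of_partialDeriv_inr {f : (κ → ℝ) → ℝ} (hU : IsOpen U)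
    (hf : DifferentiableOn ℝ f (base e ⁻¹' U))
    (hG : ∀ q ∈ base e ⁻¹' U, ∀ i, partialDeriv (e (.inr i)) f q = -G i (base e q)) :
    Set.EqOn f (fiberAffine e G fun x => f (point e x 0)) (base e ⁻¹' U) := by
  intro p hp
  cases nonempty_fintype κ
  set x := base e p with hx
  set ξ := fiber e p with hξ
  have hmem (t : ℝ) : point e x (t • ξ) ∈ base e ⁻¹' U := by simpa using hp
  have hline (t : ℝ) : HasDerivAt (fun t : ℝ => point e x (t • ξ)) (point e 0 ξ) t := by
    simp only [point_add_smul]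
    simpa using ((hasDerivAt_id t).smul_const (point e 0 ξ)).const_add (point e x 0)
  have hderiv (t : ℝ) :
      HasDerivAt (fun t : ℝ => f (point e x (t • ξ)) + t * ∑ i, G i x * ξ i) 0 t := by
    have hcomp := ((hf.differentiableAt
      ((hU.preimage (base e).continuous).mem_nhds (hmem t))).hasFDerivAt.comp_hasDerivAt t
      (hline t)).add ((hasDerivAt_id t).mul_const (∑ i, G i x * ξ i))
    refine hcomp.congr_deriv ?_
    have hdir (i : ι) := hG _ (hmem t) i
    simp only [partialDeriv, base_point] at hdir
    simp [point_zero_eq_sum, hdir, mul_comm]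
  have hconst := is_const_of_deriv_eq_zero (fun t => (hderiv t).differentiableAt)
    (fun t => (hderiv t).deriv) 1 0
  simp only [one_smul, zero_smul, one_mul, zero_mul, add_zero, hx, hξ, point_base_fiber] at hconst
  simp only [fiberAffine]
  linarith

variable [DecidableEq ι]

lemma partialDeriv_inl_fiberAffine (hG : ∀ k, DifferentiableAt ℝ (G k) (base e p))
    (hs : DifferentiableAt ℝ s (base e p)) (i : ι) :
    partialDeriv (e (.inl i)) (fiberAffine e G s) p
      = fiberAffine e (fun k => partialDeriv i (G k)) (partialDeriv i s) p := by
  simp [partialDeriv, (hasFDerivAt_fiberAffine hG hs).fderiv, fiberAffine, mul_comm]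

end FiberAffine

section FiberConstant

variable {ι κ : Type*} [Finite ι] [DecidableEq κ] {e : ι ⊕ ι ≃ κ} {f : (κ → ℝ) → ℝ}
  {s : (ι → ℝ) → ℝ} {U : Set (ι → ℝ)} {p : κ → ℝ}

lemma eq_comp_base_of_partialDeriv_inr_eq_zero [Finite κ] (hU : IsOpen U)
    (hf : DifferentiableOn ℝ f (base e ⁻¹' U))
    (h : ∀ q ∈ base e ⁻¹' U, ∀ i, partialDeriv (e (.inr i)) f q = 0) :
    Set.EqOn f (fun p => f (point e (base e p) 0)) (base e ⁻¹' U) := fun p hp => by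
  cases nonempty_fintype ι
  have := eq_fiberAffine_of_partialDeriv_inr (G := fun _ _ => 0) hU hf (by simpa using h) hp
  simpa [fiberAffine] using this

variable [DecidableEq ι]

lemma partialDeriv_inl_comp_base [Finite κ] (hs : DifferentiableAt ℝ s (base e p)) (i : ι) :
    partialDeriv (e (.inl i)) (fun q => s (base e q)) p = partialDeriv i s (base e p) := by
  cases nonempty_fintype ι
  cases nonempty_fintype κ
  simp [partialDeriv, (hs.hasFDerivAt.comp p (base e).hasFDerivAt).fderiv,
    show (fun q => s (base e q)) = s ∘ base e from rfl]

lemma partialDeriv_inl_of_partialDeriv_inr_eq_zero [Fintype κ] (hU : IsOpen U)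
    (hf : ContDiffOn ℝ 1 f (base e ⁻¹' U))
    (h : ∀ q ∈ base e ⁻¹' U, ∀ i, partialDeriv (e (.inr i)) f q = 0) (i : ι)
    (hp : p ∈ base e ⁻¹' U) :
    partialDeriv (e (.inl i)) f p = partialDeriv i (fun x => f (point e x 0)) (base e p) := by
  cases nonempty_fintype ι
  have hV := hU.preimage (base e).continuous
  rw [partialDeriv_congr hV (eq_comp_base_of_partialDeriv_inr_eq_zero hU
    (hf.differentiableOn one_ne_zero) h) _ hp]
  exact partialDeriv_inl_comp_base (s := fun x => f (point e x 0))
    (((contDiffOn_comp_zeroSection hf).differentiableOn one_ne_zero).differentiableAt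
      (hU.mem_nhds hp)) i

end FiberConstant

section LieDerivatives

variable {ι κ : Type*}

/-- The Lie derivative `ℒ_X T` of a covariant 2-tensor in the coordinates of `ℝ^κ`; the case
`κ = Fin 4` is `lieT`. -/
def lieDerivTensor [Fintype κ] [DecidableEq κ] (X : κ → (κ → ℝ) → ℝ) (T : (κ → ℝ) → Matrix κ κ ℝ)
    (a b : κ) (p : κ → ℝ) : ℝ :=
  ∑ c, (X c p * partialDeriv c (fun q => T q a b) p
    + T p c b * partialDeriv a (X c) p + T p a c * partialDeriv b (X c) p)

/-- `X` is a Killing field of `T` on `V`, that is, `ℒ_X T = 0` on `V`. -/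
def IsKillingOn [Fintype κ] [DecidableEq κ] (X : κ → (κ → ℝ) → ℝ) (T : (κ → ℝ) → Matrix κ κ ℝ)
    (V : Set (κ → ℝ)) : Prop :=
  ∀ p ∈ V, ∀ a b, lieDerivTensor X T a b p = 0

/-- The Lie derivative `(ℒ_K Γ)^k_{ij}` of the connection with Christoffel symbols
`Γ k i j = Γ^k_{ij}` in the coordinates of `ℝ^ι`; the case `ι = Fin 2` is `lieConn`. -/
def lieDerivConn [Fintype ι] [DecidableEq ι] (Γ : ι → ι → ι → (ι → ℝ) → ℝ) (K : ι → (ι → ℝ) → ℝ)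
    (k i j : ι) (x : ι → ℝ) : ℝ :=
  partialDeriv i (partialDeriv j (K k)) x
    + ∑ m, (K m x * partialDeriv m (Γ k i j) x - Γ m i j x * partialDeriv m (K k) x
        + Γ k i m x * partialDeriv j (K m) x + Γ k j m x * partialDeriv i (K m) x)

lemma IsKillingOn.congr [Fintype κ] [DecidableEq κ] {X Y : κ → (κ → ℝ) → ℝ}
    {T : (κ → ℝ) → Matrix κ κ ℝ} {V : Set (κ → ℝ)} (hX : IsKillingOn X T V) (hV : IsOpen V)
    (hXY : ∀ a, Set.EqOn (X a) (Y a) V) : IsKillingOn Y T V := fun p hp a b => by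
  rw [← hX p hp a b]
  simp only [lieDerivTensor, hXY _ hp, partialDeriv_congr hV (hXY _) _ hp]

end LieDerivatives

section WalkerMetrics

variable {ι κ : Type*} [DecidableEq ι] (e : ι ⊕ ι ≃ κ)

/-- The metric in Walker normal form with `g(∂_{ξ_i}, ∂_{ξ_j}) = 0`,
`g(∂_{ξ_i}, ∂_{x^j}) = ½ δ_{ij}` and `g(∂_{x^i}, ∂_{x^j}) = A_{ij}`. -/
def walkerMetric (A : ι → ι → (κ → ℝ) → ℝ) (p : κ → ℝ) : Matrix κ κ ℝ :=
  (Matrix.fromBlocks (.of fun i j => A i j p) ((1 / 2 : ℝ) • 1) ((1 / 2 : ℝ) • 1) 0).reindex e e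

variable {e} [Fintype κ] [DecidableEq κ]
  {A : ι → ι → (κ → ℝ) → ℝ} {X : κ → (κ → ℝ) → ℝ} {V : Set (κ → ℝ)} {p : κ → ℝ}

lemma lieDerivTensor_walkerMetric_inr_inr [Finite ι] (i j : ι) :
    lieDerivTensor X (walkerMetric e A) (e (.inr i)) (e (.inr j)) p
      = (partialDeriv (e (.inr i)) (X (e (.inl j))) p
          + partialDeriv (e (.inr j)) (X (e (.inl i))) p) / 2 := by
  cases nonempty_fintype ι
  simp only [lieDerivTensor, walkerMetric, reindex_apply, submatrix_apply, Equiv.symm_apply_apply,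
    fromBlocks_apply₂₂, fromBlocks_apply₁₂, fromBlocks_apply₂₁, Matrix.zero_apply,
    Matrix.smul_apply, Matrix.one_apply, partialDeriv_const, smul_eq_mul, mul_ite, mul_one,
    mul_zero, ite_mul, zero_mul, zero_add, add_zero, ← e.sum_comp, Fintype.sum_sum_type,
    Finset.sum_add_distrib, Finset.sum_ite_eq, Finset.sum_ite_eq', Finset.sum_const_zero,
    Finset.mem_univ, if_true]
  ring

lemma lieDerivTensor_walkerMetric_inr_inl [Fintype ι] (i j : ι) :
    lieDerivTensor X (walkerMetric e A) (e (.inr i)) (e (.inl j)) p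
      = (partialDeriv (e (.inr i)) (X (e (.inr j))) p
          + partialDeriv (e (.inl j)) (X (e (.inl i))) p) / 2
        + ∑ m, A m j p * partialDeriv (e (.inr i)) (X (e (.inl m))) p := by
  simp only [lieDerivTensor, walkerMetric, reindex_apply, submatrix_apply, Equiv.symm_apply_apply,
    fromBlocks_apply₁₁, fromBlocks_apply₂₁, fromBlocks_apply₂₂, of_apply, Matrix.zero_apply,
    Matrix.smul_apply, Matrix.one_apply, partialDeriv_const, smul_eq_mul, mul_ite, mul_one,
    mul_zero, ite_mul, zero_mul, zero_add, add_zero, ← e.sum_comp, Fintype.sum_sum_type,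
    Finset.sum_add_distrib, Finset.sum_ite_eq, Finset.sum_ite_eq', Finset.sum_const_zero,
    Finset.mem_univ, if_true]
  ring

lemma lieDerivTensor_walkerMetric_inl_inl [Fintype ι] (i j : ι) :
    lieDerivTensor X (walkerMetric e A) (e (.inl i)) (e (.inl j)) p
      = ∑ m, X (e (.inl m)) p * partialDeriv (e (.inl m)) (A i j) p
        + ∑ m, X (e (.inr m)) p * partialDeriv (e (.inr m)) (A i j) p
        + ∑ m, (A m j p * partialDeriv (e (.inl i)) (X (e (.inl m))) p
          + A i m p * partialDeriv (e (.inl j)) (X (e (.inl m))) p)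
        + (partialDeriv (e (.inl i)) (X (e (.inr j))) p
          + partialDeriv (e (.inl j)) (X (e (.inr i))) p) / 2 := by
  simp only [lieDerivTensor, walkerMetric, reindex_apply, submatrix_apply, Equiv.symm_apply_apply,
    fromBlocks_apply₁₁, fromBlocks_apply₂₁, fromBlocks_apply₁₂, of_apply, Matrix.smul_apply,
    Matrix.one_apply, smul_eq_mul, mul_ite, mul_one, mul_zero, ite_mul, zero_mul, ← e.sum_comp,
    Fintype.sum_sum_type, Finset.sum_add_distrib, Finset.sum_ite_eq, Finset.sum_ite_eq',
    Finset.mem_univ, if_true]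
  ring

namespace IsKillingOn

lemma partialDeriv_inr_inl_antisymm [Finite ι] (h : IsKillingOn X (walkerMetric e A) V)
    (hp : p ∈ V) (i j : ι) : partialDeriv (e (.inr i)) (X (e (.inl j))) p
      = -partialDeriv (e (.inr j)) (X (e (.inl i))) p := by
  have := h p hp (e (.inr i)) (e (.inr j))
  rw [lieDerivTensor_walkerMetric_inr_inr] at this
  linarith

lemma partialDeriv_inr_inr [Fintype ι] (h : IsKillingOn X (walkerMetric e A) V) (hp : p ∈ V)
    (i j : ι) : partialDeriv (e (.inr i)) (X (e (.inr j))) p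
      = -partialDeriv (e (.inl j)) (X (e (.inl i))) p
        - 2 * ∑ m, A m j p * partialDeriv (e (.inr i)) (X (e (.inl m))) p := by
  have := h p hp (e (.inr i)) (e (.inl j))
  rw [lieDerivTensor_walkerMetric_inr_inl] at this
  linarith

lemma partialDeriv_inr_partialDeriv_inr_inl_eq_zero [Finite ι]
    (h : IsKillingOn X (walkerMetric e A) V) (hV : IsOpen V)
    (hX : ∀ a, ContDiffOn ℝ 2 (X a) V) (hp : p ∈ V) (i j k : ι) :
    partialDeriv (e (.inr i)) (partialDeriv (e (.inr j)) (X (e (.inl k)))) p = 0 := by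
  have symm (i j k) := partialDeriv_comm hV (hX (e (.inl k))) (e (.inr i)) (e (.inr j)) hp
  have antisymm (i j k) :
      partialDeriv (e (.inr i)) (partialDeriv (e (.inr j)) (X (e (.inl k)))) p
        = -partialDeriv (e (.inr i)) (partialDeriv (e (.inr k)) (X (e (.inl j)))) p := by
    rw [partialDeriv_congr hV (fun q hq => h.partialDeriv_inr_inl_antisymm hq j k) _ hp,
      partialDeriv_neg]
  linarith [symm i j k, antisymm j i k, symm j k i, antisymm k j i, symm k i j, antisymm i k j]

lemma partialDeriv_inr_inl_eq_of_base_eq [Finite ι] {U : Set (ι → ℝ)} {q : κ → ℝ}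
    (h : IsKillingOn X (walkerMetric e A) (base e ⁻¹' U))
    (hU : IsOpen U) (hX : ∀ a, ContDiffOn ℝ 2 (X a) (base e ⁻¹' U)) (hp : p ∈ base e ⁻¹' U)
    (hpq : base e q = base e p) (i j : ι) :
    partialDeriv (e (.inr i)) (X (e (.inl j))) q
      = partialDeriv (e (.inr i)) (X (e (.inl j))) p := by
  have hV := hU.preimage (base e).continuous
  have hconst {q : κ → ℝ} (hq : q ∈ base e ⁻¹' U) : partialDeriv (e (.inr i)) (X (e (.inl j))) q
      = partialDeriv (e (.inr i)) (X (e (.inl j))) (point e (base e q) 0) :=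
    eq_comp_base_of_partialDeriv_inr_eq_zero hU (differentiableOn_partialDeriv hV (hX _) _)
      (fun q hq k => h.partialDeriv_inr_partialDeriv_inr_inl_eq_zero hV hX hq k i j) hq
  rw [hconst (show base e q ∈ U from hpq ▸ hp), hconst hp, hpq]

-- The integrability condition `∂_{ξ_i} ∂_{ξ_l} X^{ξ_j} = ∂_{ξ_l} ∂_{ξ_i} X^{ξ_j}`.
lemma partialDeriv_inl_partialDeriv_inr_inl [Fintype ι]
    (h : IsKillingOn X (walkerMetric e A) V) (hV : IsOpen V)
    (hX : ∀ a, ContDiffOn ℝ 2 (X a) V) (hA : ∀ i j, DifferentiableOn ℝ (A i j) V) (hp : p ∈ V)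
    (i j l : ι) :
    partialDeriv (e (.inl j)) (partialDeriv (e (.inr l)) (X (e (.inl i)))) p
      = ∑ m, (partialDeriv (e (.inr i)) (A m j) p * partialDeriv (e (.inr l)) (X (e (.inl m))) p
        - partialDeriv (e (.inr l)) (A m j) p
          * partialDeriv (e (.inr i)) (X (e (.inl m))) p) := by
  have hdiff {f : (κ → ℝ) → ℝ} (hf : DifferentiableOn ℝ f V) : HasFDerivAt f (fderiv ℝ f p) p :=
    (hf.differentiableAt (hV.mem_nhds hp)).hasFDerivAt
  have second (l i : ι) :
      partialDeriv (e (.inr l)) (partialDeriv (e (.inr i)) (X (e (.inr j)))) p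
        = -partialDeriv (e (.inl j)) (partialDeriv (e (.inr l)) (X (e (.inl i)))) p
          - 2 * ∑ m, partialDeriv (e (.inr l)) (A m j) p
            * partialDeriv (e (.inr i)) (X (e (.inl m))) p := by
    rw [partialDeriv_congr hV (fun q hq => h.partialDeriv_inr_inr hq i j) _ hp,
      ← partialDeriv_comm hV (hX _) _ _ hp, partialDeriv]
    have hd := (hdiff (differentiableOn_partialDeriv hV (hX (e (.inl i))) (e (.inl j)))).neg.sub
      ((HasFDerivAt.fun_sum (u := Finset.univ) fun m _ => (hdiff (hA m j)).mul (hdiff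
        (differentiableOn_partialDeriv hV (hX (e (.inl m))) (e (.inr i))))).const_mul 2)
    refine (DFunLike.congr_fun hd.fderiv _).trans ?_
    have hzero (m : ι) := h.partialDeriv_inr_partialDeriv_inr_inl_eq_zero hV hX hp l i m
    simp only [partialDeriv] at hzero ⊢
    simp [hzero, mul_comm]
  have hneg : partialDeriv (e (.inl j)) (partialDeriv (e (.inr i)) (X (e (.inl l)))) p
      = -partialDeriv (e (.inl j)) (partialDeriv (e (.inr l)) (X (e (.inl i)))) p := by
    rw [partialDeriv_congr hV (fun q hq => h.partialDeriv_inr_inl_antisymm hq i l) _ hp,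
      partialDeriv_neg]
  have hcomm := partialDeriv_comm hV (hX (e (.inr j))) (e (.inr l)) (e (.inr i)) hp
  rw [second l i, second i l, hneg] at hcomm
  rw [Finset.sum_sub_distrib]
  linarith

end IsKillingOn

end WalkerMetrics

section EinsteinLift

variable {ι κ : Type*} [Fintype ι] (e : ι ⊕ ι ≃ κ)

/-- The functions `-∑ k, Γ^k_{ij} ξ_k + Λ ξ_i ξ_j + S_{ij}` on the total space. For
`S = Λ⁻¹ P_{(ij)}` they are the components `g(∂_{x^i}, ∂_{x^j})` of the Einstein lift. -/
def einsteinBlock (Γ : ι → ι → ι → (ι → ℝ) → ℝ) (Λ : ℝ) (S : ι → ι → (ι → ℝ) → ℝ) (i j : ι)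
    (p : κ → ℝ) : ℝ :=
  fiberAffine e (fun k => Γ k i j) (S i j) p + Λ * fiber e p i * fiber e p j

/-- The lift `∑ i, K^i ∂_{x^i} + ∑ i, (σ_i - ∑ j, ξ_j ∂_i K^j) ∂_{ξ_i}` of a vector field `K`,
the cotangent lift of `K` translated along the fibres by the one-form `σ`. -/
def cotangentLift [DecidableEq ι] (K σ : ι → (ι → ℝ) → ℝ) (a : κ) (p : κ → ℝ) : ℝ :=
  Sum.elim (fun i => K i (base e p))
    (fun i => fiberAffine e (fun j => partialDeriv i (K j)) (σ i) p) (e.symm a)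

variable {e} {Γ : ι → ι → ι → (ι → ℝ) → ℝ} {Λ : ℝ} {S : ι → ι → (ι → ℝ) → ℝ}
  {K σ : ι → (ι → ℝ) → ℝ} {U : Set (ι → ℝ)} {p : κ → ℝ}

lemma cotangentLift_inl [DecidableEq ι] (i : ι) :
    cotangentLift e K σ (e (.inl i)) = fun p => K i (base e p) := by
  simp [funext_iff, cotangentLift]

lemma cotangentLift_inr [DecidableEq ι] (i : ι) :
    cotangentLift e K σ (e (.inr i)) = fiberAffine e (fun j => partialDeriv i (K j)) (σ i) := by
  simp [funext_iff, cotangentLift]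

lemma sum_einsteinBlock_mul_left (c : ι → ℝ) (j : ι) :
    ∑ m, einsteinBlock e Γ Λ S m j p * c m
      = ∑ m, S m j (base e p) * c m - ∑ k, (∑ m, Γ k m j (base e p) * c m) * fiber e p k
        + Λ * (∑ m, c m * fiber e p m) * fiber e p j := by
  have hterm (m : ι) : einsteinBlock e Γ Λ S m j p * c m
      = c m * (S m j (base e p) - ∑ k, Γ k m j (base e p) * fiber e p k)
        + Λ * (c m * fiber e p m) * fiber e p j := by
    simp only [einsteinBlock, fiberAffine]
    ring
  simp only [hterm, Finset.sum_add_distrib, sum_mul_affine, Finset.mul_sum, Finset.sum_mul,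
    mul_comm (c _) (S _ _ _), mul_comm (c _) (Γ _ _ _ _)]

lemma sum_einsteinBlock_mul_right (c : ι → ℝ) (i : ι) :
    ∑ m, einsteinBlock e Γ Λ S i m p * c m
      = ∑ m, S i m (base e p) * c m - ∑ k, (∑ m, Γ k i m (base e p) * c m) * fiber e p k
        + Λ * (∑ m, c m * fiber e p m) * fiber e p i := by
  have hswap (m : ι) : einsteinBlock e Γ Λ S i m p
      = einsteinBlock e (fun k a b => Γ k b a) Λ (fun a b => S b a) m i p := by
    simp only [einsteinBlock, fiberAffine, mul_right_comm]
  simp only [hswap, sum_einsteinBlock_mul_left]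

variable [Finite κ]

lemma hasFDerivAt_einsteinBlock {i j : ι} (hΓ : ∀ k, DifferentiableAt ℝ (Γ k i j) (base e p))
    (hS : DifferentiableAt ℝ (S i j) (base e p)) :
    HasFDerivAt (einsteinBlock e Γ Λ S i j)
      (fderiv ℝ (fiberAffine e (fun k => Γ k i j) (S i j)) p
        + ((Λ * fiber e p i) • (ContinuousLinearMap.proj j).comp (fiber e)
          + fiber e p j • Λ • (ContinuousLinearMap.proj i).comp (fiber e))) p := by
  cases nonempty_fintype κ
  exact (hasFDerivAt_fiberAffine hΓ hS).differentiableAt.hasFDerivAt.fun_add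
    ((((ContinuousLinearMap.proj i).comp (fiber e)).hasFDerivAt.const_mul Λ).fun_mul
      ((ContinuousLinearMap.proj j).comp (fiber e)).hasFDerivAt)

lemma differentiableOn_einsteinBlock (hU : IsOpen U) {i j : ι}
    (hΓ : ∀ k, DifferentiableOn ℝ (Γ k i j) U) (hS : DifferentiableOn ℝ (S i j) U) :
    DifferentiableOn ℝ (einsteinBlock e Γ Λ S i j) (base e ⁻¹' U) := fun _ hp =>
  (hasFDerivAt_einsteinBlock (fun k => (hΓ k).differentiableAt (hU.mem_nhds hp))
    (hS.differentiableAt (hU.mem_nhds hp))).differentiableAt.differentiableWithinAt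

variable [DecidableEq κ]

lemma partialDeriv_inl_einsteinBlock [DecidableEq ι] {i j : ι}
    (hΓ : ∀ k, DifferentiableAt ℝ (Γ k i j) (base e p))
    (hS : DifferentiableAt ℝ (S i j) (base e p)) (m : ι) :
    partialDeriv (e (.inl m)) (einsteinBlock e Γ Λ S i j) p
      = fiberAffine e (fun k => partialDeriv m (Γ k i j)) (partialDeriv m (S i j)) p := by
  rw [← partialDeriv_inl_fiberAffine hΓ hS]
  simp [partialDeriv, (hasFDerivAt_einsteinBlock hΓ hS).fderiv]

lemma partialDeriv_inr_einsteinBlock [DecidableEq ι] {i j : ι}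
    (hΓ : ∀ k, DifferentiableAt ℝ (Γ k i j) (base e p))
    (hS : DifferentiableAt ℝ (S i j) (base e p)) (m : ι) :
    partialDeriv (e (.inr m)) (einsteinBlock e Γ Λ S i j) p
      = -Γ m i j (base e p)
        + Λ * ((if i = m then fiber e p j else 0) + if j = m then fiber e p i else 0) := by
  rw [← partialDeriv_inr_fiberAffine hΓ hS]
  simp only [partialDeriv, (hasFDerivAt_einsteinBlock hΓ hS).fderiv,
    _root_.add_apply, _root_.smul_apply, ContinuousLinearMap.comp_apply, fiber_single_inr,
    ContinuousLinearMap.proj_apply, Pi.single_apply, smul_eq_mul]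
  split_ifs <;> ring

lemma sum_partialDeriv_inr_einsteinBlock {i j : ι}
    (hΓ : ∀ k, DifferentiableAt ℝ (Γ k i j) (base e p))
    (hS : DifferentiableAt ℝ (S i j) (base e p)) (c : ι → ℝ) :
    ∑ m, c m * partialDeriv (e (.inr m)) (einsteinBlock e Γ Λ S i j) p
      = Λ * (c i * fiber e p j + c j * fiber e p i) - ∑ m, Γ m i j (base e p) * c m := by
  classical
  simp only [partialDeriv_inr_einsteinBlock hΓ hS, mul_add, mul_ite, mul_zero,
    Finset.sum_add_distrib, Finset.sum_ite_eq, Finset.mem_univ, if_true, mul_neg,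
    Finset.sum_neg_distrib, mul_comm (c _) (Γ _ _ _ _)]
  ring

end EinsteinLift

section ProjectiveLifts

variable {ι κ : Type*} [Fintype ι] [DecidableEq ι] [Fintype κ] [DecidableEq κ] {e : ι ⊕ ι ≃ κ}
  {Γ : ι → ι → ι → (ι → ℝ) → ℝ} {Λ : ℝ} {S : ι → ι → (ι → ℝ) → ℝ} {K σ : ι → (ι → ℝ) → ℝ}
  {X : κ → (κ → ℝ) → ℝ} {U : Set (ι → ℝ)} {x : ι → ℝ} {p : κ → ℝ}

lemma lieDerivTensor_walkerMetric_cotangentLift_inl_inl (hU : IsOpen U)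
    (hΓ : ∀ k i j, DifferentiableOn ℝ (Γ k i j) U)
    (hΓsym : ∀ k i j, ∀ x ∈ U, Γ k i j x = Γ k j i x) (hS : ∀ i j, DifferentiableOn ℝ (S i j) U)
    (hK : ∀ m, ContDiffOn ℝ 2 (K m) U) (hσ : ∀ m, DifferentiableOn ℝ (σ m) U)
    (hp : p ∈ base e ⁻¹' U) (i j : ι) :
    lieDerivTensor (cotangentLift e K σ) (walkerMetric e (einsteinBlock e Γ Λ S))
        (e (.inl i)) (e (.inl j)) p
      = fiberAffine e
          (fun k x => lieDerivConn Γ K k i j x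
            - ((if k = i then Λ * σ j x else 0) + if k = j then Λ * σ i x else 0))
          (fun x => ∑ m, (K m x * partialDeriv m (S i j) x + S m j x * partialDeriv i (K m) x
              + S i m x * partialDeriv j (K m) x) - ∑ m, Γ m i j x * σ m x
            + (partialDeriv i (σ j) x + partialDeriv j (σ i) x) / 2) p := by
  set x := base e p with hx
  set ξ := fiber e p with hξ
  have hd {f : (ι → ℝ) → ℝ} (hf : DifferentiableOn ℝ f U) : DifferentiableAt ℝ f x :=
    hf.differentiableAt (hU.mem_nhds hp)
  have hdK (m : ι) := hd ((hK m).differentiableOn two_ne_zero)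
  have hdK' (i m : ι) := hd (differentiableOn_partialDeriv hU (hK m) i)
  have hcomm (k : ι) : partialDeriv j (partialDeriv i (K k)) x
      = partialDeriv i (partialDeriv j (K k)) x := partialDeriv_comm hU (hK k) j i hp
  have hsym (k i j : ι) := hΓsym k i j x hp
  rw [lieDerivTensor_walkerMetric_inl_inl]
  simp only [cotangentLift_inl, cotangentLift_inr,
    partialDeriv_inl_comp_base (hdK _),
    partialDeriv_inl_fiberAffine (hdK' _) (hd (hσ _)),
    partialDeriv_inl_einsteinBlock (fun k => hd (hΓ k i j)) (hd (hS i j)),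
    sum_partialDeriv_inr_einsteinBlock (fun k => hd (hΓ k i j)) (hd (hS i j)),
    Finset.sum_add_distrib, sum_einsteinBlock_mul_left, sum_einsteinBlock_mul_right, ← hx]
  simp only [fiberAffine, sum_mul_affine, lieDerivConn, ← hx, ← hξ, hcomm,
    Finset.sum_add_distrib, Finset.sum_sub_distrib, add_mul, sub_mul, ite_mul, zero_mul,
    Finset.sum_ite_eq', Finset.mem_univ, if_true, hsym]
  ring

lemma IsKillingOn.partialDeriv_inr_inl_eq_zero
    (h : IsKillingOn X (walkerMetric e (einsteinBlock e Γ Λ S)) (base e ⁻¹' U)) (hU : IsOpen U)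
    (hΓ : ∀ k i j, DifferentiableOn ℝ (Γ k i j) U) (hS : ∀ i j, DifferentiableOn ℝ (S i j) U)
    (hΛ : Λ ≠ 0) (hX : ∀ a, ContDiffOn ℝ 2 (X a) (base e ⁻¹' U)) (hp : p ∈ base e ⁻¹' U)
    (l i : ι) : partialDeriv (e (.inr l)) (X (e (.inl i))) p = 0 := by
  have hV := hU.preimage (base e).continuous
  obtain rfl | hli := eq_or_ne l i
  · linarith [h.partialDeriv_inr_inl_antisymm hp l l]
  have hC1 : ContDiffOn ℝ 1 (partialDeriv (e (.inr l)) (X (e (.inl i)))) (base e ⁻¹' U) :=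
    contDiffOn_partialDeriv one_add_one_eq_two.le hV (hX _) _
  have hfiber (q) (hq : q ∈ base e ⁻¹' U) (k : ι) :=
    h.partialDeriv_inr_partialDeriv_inr_inl_eq_zero hV hX hq k l i
  have hdΓ (k i j) := (hΓ k i j).differentiableAt (hU.mem_nhds hp)
  have hdS (i j) := (hS i j).differentiableAt (hU.mem_nhds hp)
  have hint (ξ : ι → ℝ) :
      partialDeriv l (fun x => partialDeriv (e (.inr l)) (X (e (.inl i))) (point e x 0)) (base e p)
        = ∑ m, ((-Γ i m l (base e p) + Λ * if m = i then ξ l else 0)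
            * partialDeriv (e (.inr l)) (X (e (.inl m))) p
          - (-Γ l m l (base e p) + Λ * ((if m = l then ξ l else 0) + ξ m))
            * partialDeriv (e (.inr i)) (X (e (.inl m))) p) := by
    have hq : point e (base e p) ξ ∈ base e ⁻¹' U := by simpa using hp
    have hbase (a b : ι) := h.partialDeriv_inr_inl_eq_of_base_eq hU hX hp (base_point _ ξ) a b
    have := h.partialDeriv_inl_partialDeriv_inr_inl hV hX
      (fun i j => differentiableOn_einsteinBlock hU (fun k => hΓ k i j) (hS i j)) hq i l l
    simp only [partialDeriv_inl_of_partialDeriv_inr_eq_zero hU hC1 hfiber l hq, hbase] at this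
    simpa (disch := simp [hdΓ, hdS]) [partialDeriv_inr_einsteinBlock, hli] using this
  have h0 := hint 0
  have h1 := hint (Pi.single l 1)
  simp only [Pi.zero_apply, ite_self, mul_zero, add_zero, neg_mul, sub_neg_eq_add,
    Finset.sum_add_distrib, Finset.sum_neg_distrib, Pi.single_eq_same, mul_ite, mul_one, add_mul,
    ite_mul, zero_mul, Pi.single_apply, mul_add, Finset.sum_sub_distrib, Finset.sum_ite_eq',
    Finset.mem_univ, if_true] at h0 h1
  have : 3 * Λ * partialDeriv (e (.inr l)) (X (e (.inl i))) p = 0 := by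
    linear_combination h0 - h1 + 2 * Λ * h.partialDeriv_inr_inl_antisymm hp i l
  simpa [hΛ] using this

lemma IsKillingOn.eqOn_cotangentLift
    (h : IsKillingOn X (walkerMetric e (einsteinBlock e Γ Λ S)) (base e ⁻¹' U)) (hU : IsOpen U)
    (hΓ : ∀ k i j, DifferentiableOn ℝ (Γ k i j) U) (hS : ∀ i j, DifferentiableOn ℝ (S i j) U)
    (hΛ : Λ ≠ 0) (hX : ∀ a, ContDiffOn ℝ 2 (X a) (base e ⁻¹' U)) (a : κ) :
    Set.EqOn (X a) (cotangentLift e (fun i x => X (e (.inl i)) (point e x 0))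
      (fun i x => X (e (.inr i)) (point e x 0)) a) (base e ⁻¹' U) := by
  have hvert (i : ι) (q) (hq : q ∈ base e ⁻¹' U) (l : ι) :=
    h.partialDeriv_inr_inl_eq_zero hU hΓ hS hΛ hX hq l i
  have hdX (a : κ) := (hX a).differentiableOn two_ne_zero
  obtain ⟨i | i, rfl⟩ := e.surjective a
  · rw [cotangentLift_inl]
    exact eq_comp_base_of_partialDeriv_inr_eq_zero hU (hdX _) (hvert i)
  · rw [cotangentLift_inr]
    refine eq_fiberAffine_of_partialDeriv_inr hU (hdX _) fun q hq l => ?_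
    rw [h.partialDeriv_inr_inr hq, partialDeriv_inl_of_partialDeriv_inr_eq_zero hU
      ((hX _).of_le one_le_two) (hvert l) i hq]
    simp [hvert _ q hq]

lemma IsKillingOn.lieDerivConn_eq
    (h : IsKillingOn (cotangentLift e K σ) (walkerMetric e (einsteinBlock e Γ Λ S))
      (base e ⁻¹' U)) (hU : IsOpen U) (hΓ : ∀ k i j, DifferentiableOn ℝ (Γ k i j) U)
    (hΓsym : ∀ k i j, ∀ x ∈ U, Γ k i j x = Γ k j i x) (hS : ∀ i j, DifferentiableOn ℝ (S i j) U)
    (hK : ∀ m, ContDiffOn ℝ 2 (K m) U) (hσ : ∀ m, DifferentiableOn ℝ (σ m) U) (hx : x ∈ U)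
    (k i j : ι) :
    lieDerivConn Γ K k i j x
      = (if k = i then Λ * σ j x else 0) + if k = j then Λ * σ i x else 0 := by
  have hmem (ξ : ι → ℝ) : point e x ξ ∈ base e ⁻¹' U := by simpa using hx
  have hKilling (ξ : ι → ℝ) :=
    lieDerivTensor_walkerMetric_cotangentLift_inl_inl (Λ := Λ) hU hΓ hΓsym hS hK hσ (hmem ξ) i j
  exact sub_eq_zero.1 (coeff_eq_zero_of_fiberAffine_eq_zero
    (fun ξ => (hKilling ξ).symm.trans (h _ (hmem ξ) _ _)) k)

theorem killing_is_projLift_general {n : WithTop ℕ∞} (hn : 2 ≤ n) (hU : IsOpen U)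
    (hΓ : ∀ k i j, DifferentiableOn ℝ (Γ k i j) U)
    (hΓsym : ∀ k i j, ∀ x ∈ U, Γ k i j x = Γ k j i x) (hΛ : Λ ≠ 0)
    (hS : ∀ i j, DifferentiableOn ℝ (S i j) U) (hX : ∀ a, ContDiffOn ℝ n (X a) (base e ⁻¹' U))
    (h : IsKillingOn X (walkerMetric e (einsteinBlock e Γ Λ S)) (base e ⁻¹' U)) :
    ∃ K ρ : ι → (ι → ℝ) → ℝ,
      (∀ i, ContDiffOn ℝ n (K i) U) ∧ (∀ i, ContDiffOn ℝ n (ρ i) U) ∧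
      (∀ k i j, ∀ x ∈ U, lieDerivConn Γ K k i j x
        = (if k = i then ρ j x else 0) + (if k = j then ρ i x else 0)) ∧
      ∀ a, Set.EqOn (X a) (cotangentLift e K (fun i x => Λ⁻¹ * ρ i x) a) (base e ⁻¹' U) := by
  set K : ι → (ι → ℝ) → ℝ := fun i x => X (e (.inl i)) (point e x 0)
  set σ : ι → (ι → ℝ) → ℝ := fun i x => X (e (.inr i)) (point e x 0)
  have hK (i : ι) : ContDiffOn ℝ n (K i) U := contDiffOn_comp_zeroSection (hX _)
  have hσ (i : ι) : ContDiffOn ℝ n (σ i) U := contDiffOn_comp_zeroSection (hX _)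
  have hlift (a : κ) : Set.EqOn (X a) (cotangentLift e K σ a) (base e ⁻¹' U) :=
    h.eqOn_cotangentLift hU hΓ hS hΛ (fun a => (hX a).of_le hn) a
  refine ⟨K, fun i x => Λ * σ i x, hK, fun i => contDiffOn_const.mul (hσ i),
    fun k i j x hx => ?_, by simpa [hΛ] using hlift⟩
  exact (h.congr (hU.preimage (base e).continuous) hlift).lieDerivConn_eq hU hΓ hΓsym hS
    (fun m => (hK m).of_le hn)
    (fun m => (hσ m).differentiableOn (two_pos.trans_le hn).ne') hx k i j

end ProjectiveLifts

section Plane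

variable {Γ : Conn} {Λ : ℝ} {U : Set Pt2}

/-- The coordinates `(x¹, x², ξ₁, ξ₂)` of `U × ℝ²`: two base followed by two fibre coordinates. -/
def coordEquiv : Fin 2 ⊕ Fin 2 ≃ Fin 4 := finSumFinEquiv

lemma base_coordEquiv : ⇑(base coordEquiv) = bpt := by
  ext p i; fin_cases i <;> rfl

lemma fiber_coordEquiv : ⇑(fiber coordEquiv) = fib := by
  ext p i; fin_cases i <;> rfl

lemma walkerMetric_coordEquiv (A : Fin 2 → Fin 2 → Pt4 → ℝ) (p : Pt4) :
    walkerMetric coordEquiv A p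
      = !![A 0 0 p, A 0 1 p, 1/2, 0; A 1 0 p, A 1 1 p, 0, 1/2; 1/2, 0, 0, 0; 0, 1/2, 0, 0] := by
  have h0 : coordEquiv.symm 0 = .inl 0 := rfl
  have h1 : coordEquiv.symm 1 = .inl 1 := rfl
  have h2 : coordEquiv.symm 2 = .inr 0 := rfl
  have h3 : coordEquiv.symm 3 = .inr 1 := rfl
  ext a b
  fin_cases a <;> fin_cases b <;> simp [walkerMetric, h0, h1, h2, h3]

/-- The symmetric tensor `Λ⁻¹ P_{(ij)}` added to the Einstein lift metric. -/
def scaledSchouten (Γ : Conn) (Λ : ℝ) (i j : Fin 2) (x : Pt2) : ℝ :=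
  Λ⁻¹ * ((schouten Γ i j x + schouten Γ j i x) / 2)

lemma einsteinLift_eq_walkerMetric :
    einsteinLift Γ Λ
      = walkerMetric coordEquiv (einsteinBlock coordEquiv Γ Λ (scaledSchouten Γ Λ)) := by
  funext p
  have hblock (i j : Fin 2) : einsteinBlock coordEquiv Γ Λ (scaledSchouten Γ Λ) i j p
      = -(∑ k, Γ k i j (bpt p) * fib p k) + Λ * fib p i * fib p j
        + Λ⁻¹ * ((schouten Γ i j (bpt p) + schouten Γ j i (bpt p)) / 2) := by
    simp only [einsteinBlock, fiberAffine, scaledSchouten, base_coordEquiv, fiber_coordEquiv]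
    ring
  simp only [walkerMetric_coordEquiv, einsteinLift, hblock]

lemma differentiableOn_scaledSchouten (hU : IsOpen U) (hΓ : ∀ k i j, ContDiffOn ℝ 2 (Γ k i j) U)
    (i j : Fin 2) : DifferentiableOn ℝ (scaledSchouten Γ Λ i j) U := by
  have hdΓ (k i j) : DifferentiableOn ℝ (Γ k i j) U := (hΓ k i j).differentiableOn two_ne_zero
  have hpd (m k i j) : DifferentiableOn ℝ (pd2 m (Γ k i j)) U :=
    differentiableOn_partialDeriv hU (hΓ k i j) m
  unfold scaledSchouten schouten ricciT curv
  fun_prop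

end Plane

/-- Every Killing field of the Einstein lift metric is the lift of a projective
vector field of the underlying projective structure. -/
theorem killing_is_projLift
    (U : Set Pt2) (hUopen : IsOpen U) (hUconn : IsConnected U)
    (Γ : Conn) (hΓsmooth : ∀ k i j, ContDiffOn ℝ (⊤ : ℕ∞) (Γ k i j) U)
    (hΓsym : ∀ k i j, ∀ x ∈ U, Γ k i j x = Γ k j i x)
    (Λ : ℝ) (hΛ : Λ ≠ 0)
    (𝒦 : Fin 4 → Pt4 → ℝ)
    (h𝒦smooth : ∀ a, ContDiffOn ℝ (⊤ : ℕ∞) (𝒦 a) {p : Pt4 | bpt p ∈ U})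
    (h𝒦killing : ∀ p : Pt4, bpt p ∈ U →
      ∀ a b, lieT 𝒦 (einsteinLift Γ Λ) a b p = 0) :
    ∃ (K : Fin 2 → Pt2 → ℝ) (ρ : Fin 2 → Pt2 → ℝ),
      (∀ i, ContDiffOn ℝ (⊤ : ℕ∞) (K i) U) ∧ (∀ i, ContDiffOn ℝ (⊤ : ℕ∞) (ρ i) U) ∧
      (∀ k i j, ∀ x ∈ U, lieConn Γ K k i j x
        = (if k = i then ρ j x else 0) + (if k = j then ρ i x else 0)) ∧
      (∀ p : Pt4, bpt p ∈ U →
        𝒦 0 p = K 0 (bpt p) ∧ 𝒦 1 p = K 1 (bpt p) ∧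
        𝒦 2 p = -(∑ j, fib p j * pd2 0 (K j) (bpt p)) + Λ⁻¹ * ρ 0 (bpt p) ∧
        𝒦 3 p = -(∑ j, fib p j * pd2 1 (K j) (bpt p)) + Λ⁻¹ * ρ 1 (bpt p)) := by
  have hS := differentiableOn_scaledSchouten (Λ := Λ) hUopen
    fun k i j => (hΓsmooth k i j).of_le (WithTop.coe_le_coe.2 le_top)
  rw [einsteinLift_eq_walkerMetric, ← base_coordEquiv] at h𝒦killing
  rw [← base_coordEquiv] at h𝒦smooth ⊢
  obtain ⟨K, ρ, hK, hρ, hproj, hlift⟩ := killing_is_projLift_general (e := coordEquiv)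
    (WithTop.coe_le_coe.2 le_top) hUopen (fun k i j => (hΓsmooth k i j).differentiableOn (by simp))
    hΓsym hΛ hS h𝒦smooth h𝒦killing
  refine ⟨K, ρ, hK, hρ, hproj, fun p hp => ?_⟩
  have hbase (i : Fin 2) : 𝒦 (coordEquiv (.inl i)) p = K i (base coordEquiv p) := by
    rw [hlift _ hp, cotangentLift_inl]
  have hfiber (i : Fin 2) : 𝒦 (coordEquiv (.inr i)) p
      = -(∑ j, fib p j * pd2 i (K j) (base coordEquiv p)) + Λ⁻¹ * ρ i (base coordEquiv p) := by
    rw [hlift _ hp, cotangentLift_inr, fiberAffine, fiber_coordEquiv, sub_eq_neg_add]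
    simp only [mul_comm (fib p _), pd2, partialDeriv]
  exact ⟨hbase 0, hbase 1, hfiber 0, hfiber 1⟩
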